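/- There exist universal constants C, C' > 0 such that for the lazy simple random walk on any connected d-regular graph G on N vertices, every nonempty S ⊆ G and every x ∈ S, the harmonic measure from the uniform (stationary) distribution satisfies h_S(x) ≤ (C/(u(P)·(1−λ))) · max( 1/|S|, (log N)/N ) ≤ (C'/(1−λ)²) · max( 1/|S|, (log N)/N ). -/

import Mathlib

open MeasureTheory Finset
open scoped ENNReal

namespace HM

variable {G : Type*} [Fintype G] [DecidableEq G]

/-- `P` is a stochastic (transition) matrix. -/
def IsStochastic (P : Matrix G G ℝ) : Prop :=
  (∀ x y, 0 ≤ P x y) ∧ ∀ x, ∑ y, P x y = 1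

/-- Irreducibility: every state reaches every other state. -/
def IsIrreducible (P : Matrix G G ℝ) : Prop :=
  ∀ x y : G, ∃ t : ℕ, 0 < (P ^ t) x y

/-- Aperiodicity: the gcd of return times is `1` at every state. -/
def IsAperiodic (P : Matrix G G ℝ) : Prop :=
  ∀ x : G, ∀ d : ℕ, (∀ t : ℕ, 0 < (P ^ t) x x → d ∣ t) → d = 1

/-- `P` is reversible with respect to the full-support probability vector `pi`. -/
def IsReversible (P : Matrix G G ℝ) (pi : G → ℝ) : Prop :=
  (∀ x, 0 < pi x) ∧ (∑ x, pi x = 1) ∧ ∀ x y, pi x * P x y = pi y * P y x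

variable [MeasurableSpace G]

/-- `μ x` is the law of the Markov chain with transition matrix `P` started at `x`:
all finite-dimensional (cylinder) probabilities are given by products of transition
probabilities. -/
def IsMarkovChain (P : Matrix G G ℝ) (μ : G → Measure (ℕ → G)) : Prop :=
  (∀ x, IsProbabilityMeasure (μ x)) ∧
  ∀ (x : G) (t : ℕ) (w : ℕ → G),
    μ x {ω | ∀ i ≤ t, ω i = w i} =
      ENNReal.ofReal ((if w 0 = x then 1 else 0) * ∏ i ∈ Finset.range t, P (w i) (w (i + 1)))

/-- Hitting time `T_S = inf {t ≥ 0 : X_t ∈ S}`, with value `⊤` if `S` is never hit. -/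
noncomputable def hit (S : Set G) (ω : ℕ → G) : ℕ∞ :=
  sInf ((↑) '' {n : ℕ | ω n ∈ S})

/-- Return time `T_S^+ = inf {t ≥ 1 : X_t ∈ S}`, with value `⊤` if `S` is never hit. -/
noncomputable def hitPlus (S : Set G) (ω : ℕ → G) : ℕ∞ :=
  sInf ((↑) '' {n : ℕ | 1 ≤ n ∧ ω n ∈ S})

/-- The event `X_{T_S} = x` (in particular `T_S < ∞`). -/
def hitsAt (S : Set G) (x : G) : Set (ℕ → G) :=
  {ω | ∃ n : ℕ, hit S ω = (n : ℕ∞) ∧ ω n = x}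

/-- Harmonic measure on `S` from `y`: `h_{y,S}(x) = Pr_y[X_{T_S} = x]`. -/
noncomputable def harm (μ : G → Measure (ℕ → G)) (S : Set G) (y x : G) : ℝ :=
  (μ y (hitsAt S x)).toReal

/-- Harmonic measure on `S` from the stationary distribution:
`h_S(x) = ∑_y π(y) h_{y,S}(x)`. -/
noncomputable def harmStat (pi : G → ℝ) (μ : G → Measure (ℕ → G)) (S : Set G) (x : G) : ℝ :=
  ∑ y, pi y * harm μ S y x

/-- `π(S) = ∑_{x ∈ S} π(x)`. -/
noncomputable def piOf (pi : G → ℝ) (S : Set G) : ℝ :=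
  ∑ x, S.indicator pi x

/-- `λ = max_{j > 1} |λ_j|`, via the variational characterization: the largest absolute
value of the quadratic form of `P` on the orthogonal complement of the constants in
`L²(π)`.  For a reversible chain this equals the largest absolute value of a
non-Perron eigenvalue of `P`. -/
noncomputable def lam (P : Matrix G G ℝ) (pi : G → ℝ) : ℝ :=
  sSup {r : ℝ | ∃ f : G → ℝ, ∑ x, pi x * f x = 0 ∧ ∑ x, pi x * f x ^ 2 = 1 ∧
    r = |∑ x, pi x * (f x * ∑ y, P x y * f y)|}

/-- `π_min = min_x π(x)`. -/
noncomputable def pimin (pi : G → ℝ) : ℝ := ⨅ x, pi x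

/-- `π_max = max_x π(x)`. -/
noncomputable def pimax (pi : G → ℝ) : ℝ := ⨆ x, pi x

/-- `u(P) = min_{x ≠ y} Pr_x[T_y < T_x^+]`. -/
noncomputable def uP (μ : G → Measure (ℕ → G)) : ℝ :=
  sInf {r : ℝ | ∃ x y : G, x ≠ y ∧
    r = (μ x {ω | hit {y} ω < hitPlus {x} ω}).toReal}

/-- `E_x[T_S^+]` (as an extended nonnegative real, then converted to `ℝ`). -/
noncomputable def expHitPlus (μ : G → Measure (ℕ → G)) (S : Set G) (x : G) : ℝ :=
  (∫⁻ ω, (hitPlus S ω : ℝ≥0∞) ∂ μ x).toReal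

/-- The number of distinct states visited strictly before the return time `T_S^+`,
i.e. `|{X_0, X_1, …, X_{T_S^+ − 1}}|`. -/
noncomputable def visited (S : Set G) (ω : ℕ → G) : ℕ :=
  Set.ncard {g : G | ∃ n : ℕ, (n : ℕ∞) < hitPlus S ω ∧ ω n = g}


/-- The transition matrix of the lazy simple random walk on a `d`-regular graph:
`P(x,x) = 1/2` and `P(x,y) = 1/(2d)` for `y` adjacent to `x`. -/
noncomputable def lazySRW (H : SimpleGraph G) [DecidableRel H.Adj] (d : ℕ) :
    Matrix G G ℝ :=
  Matrix.of fun x y => if y = x then 1 / 2 else if H.Adj x y then 1 / (2 * d) else 0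



section Analytic

set_option linter.unusedSectionVars false

variable {V : Type*} [Fintype V] [DecidableEq V]

/-- Symmetric stochastic matrix with lazy diagonal. -/
structure Lazy (P : Matrix V V ℝ) : Prop where
  nn : ∀ x y, 0 ≤ P x y
  row : ∀ x, ∑ y, P x y = 1
  symm : ∀ x y, P x y = P y x
  diag : ∀ x, 1 / 2 ≤ P x x

/-- The action of `P` on functions. -/
noncomputable def ap (P : Matrix V V ℝ) (f : V → ℝ) : V → ℝ := fun x => ∑ y, P x y * f y

variable {P : Matrix V V ℝ}

lemma ap_symm (h : Lazy P) (f g : V → ℝ) : ∑ x, f x * ap P g x = ∑ x, ap P f x * g x := by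
  simp only [ap, Finset.mul_sum, Finset.sum_mul]
  rw [Finset.sum_comm]
  refine Finset.sum_congr rfl fun x _ => Finset.sum_congr rfl fun y _ => ?_
  rw [h.symm y x]; ring

lemma sum_ap (h : Lazy P) (f : V → ℝ) : ∑ x, ap P f x = ∑ x, f x := by
  have := ap_symm h (fun _ => 1) f
  simpa [ap, h.row] using this

lemma ap_sub_const (h : Lazy P) (f : V → ℝ) (c : ℝ) (x : V) :
    ap P (fun y => f y - c) x = ap P f x - c := by
  simp [ap, mul_sub, Finset.sum_sub_distrib, ← Finset.sum_mul, h.row]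

lemma ap_mono (h : Lazy P) {f g : V → ℝ} (hfg : ∀ x, f x ≤ g x) (x : V) :
    ap P f x ≤ ap P g x :=
  Finset.sum_le_sum fun y _ => mul_le_mul_of_nonneg_left (hfg y) (h.nn x y)

lemma jensen (Q : Matrix V V ℝ) (nn : ∀ x y, 0 ≤ Q x y) (row : ∀ x, ∑ y, Q x y = 1)
    (f : V → ℝ) (x : V) : (ap Q f x) ^ 2 ≤ ap Q (fun y => f y ^ 2) x := by
  have h0 : 0 ≤ ∑ y, Q x y * (f y - ap Q f x) ^ 2 :=
    Finset.sum_nonneg fun y _ => mul_nonneg (nn x y) (sq_nonneg _)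
  have h1 : ∑ y, Q x y * (f y - ap Q f x) ^ 2 =
      ap Q (fun y => f y ^ 2) x - 2 * ap Q f x * ap Q f x + (ap Q f x) ^ 2 * ∑ y, Q x y := by
    have hm : ∑ y, Q x y * f y = ap Q f x := rfl
    set m := ap Q f x
    have e : ∀ y, Q x y * (f y - m) ^ 2 =
      Q x y * f y ^ 2 - 2 * m * (Q x y * f y) + m ^ 2 * Q x y := fun y => by ring
    simp only [e, Finset.sum_add_distrib, Finset.sum_sub_distrib, ← Finset.mul_sum]
    rw [hm]; rfl
  rw [h1, row] at h0
  nlinarith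

lemma energy (h : Lazy P) (f : V → ℝ) :
    ∑ x, f x ^ 2 - ∑ x, f x * ap P f x = (1 / 2) * ∑ x, ∑ y, P x y * (f x - f y) ^ 2 := by
  have e : ∀ x y, P x y * (f x - f y) ^ 2 =
      P x y * f x ^ 2 - 2 * (f x * (P x y * f y)) + P x y * f y ^ 2 := fun x y => by ring
  have h2 : ∑ x, ∑ y, P x y * f y ^ 2 = ∑ x, f x ^ 2 := sum_ap h (fun y => f y ^ 2)
  simp only [e, Finset.sum_add_distrib, Finset.sum_sub_distrib, h2, ← Finset.sum_mul, h.row,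
    ← Finset.mul_sum]
  simp only [ap]
  ring

lemma energy_nn (h : Lazy P) (f : V → ℝ) : ∑ x, f x * ap P f x ≤ ∑ x, f x ^ 2 := by
  have := energy h f
  have h0 : 0 ≤ ∑ x, ∑ y, P x y * (f x - f y) ^ 2 := Finset.sum_nonneg fun x _ =>
    Finset.sum_nonneg fun y _ => mul_nonneg (h.nn x y) (sq_nonneg _)
  linarith

lemma contr (h : Lazy P) (f : V → ℝ) : ∑ x, ap P f x ^ 2 ≤ ∑ x, f x * ap P f x := by
  let Q : Matrix V V ℝ := fun x y => 2 * P x y - if x = y then 1 else 0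
  have qrow : ∀ x, ∑ y, Q x y = 1 := by
    intro x
    simp only [Q, Finset.sum_sub_distrib, ← Finset.mul_sum, h.row]
    norm_num
  have qnn : ∀ x y, 0 ≤ Q x y := by
    intro x y
    by_cases hxy : x = y
    · subst hxy; simp only [Q, if_true]; linarith [h.diag x]
    · simp only [Q, if_neg hxy]; linarith [h.nn x y]
  have qap : ∀ g x, ap Q g x = 2 * ap P g x - g x := by
    intro g x
    simp only [ap, Q, sub_mul, Finset.sum_sub_distrib, mul_assoc, ← Finset.mul_sum]
    simp
  have h1 : ∑ x, (ap Q f x) ^ 2 ≤ ∑ x, ap Q (fun y => f y ^ 2) x :=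
    Finset.sum_le_sum fun x _ => jensen Q qnn qrow f x
  have h2 : ∑ x, ap Q (fun y => f y ^ 2) x = ∑ x, f x ^ 2 := by
    simp only [qap, Finset.sum_sub_distrib, ← Finset.mul_sum, sum_ap h]
    ring
  have h3 : ∑ x, (ap Q f x) ^ 2 = 4 * ∑ x, ap P f x ^ 2 - 4 * ∑ x, f x * ap P f x
      + ∑ x, f x ^ 2 := by
    simp only [Finset.mul_sum, ← Finset.sum_sub_distrib, ← Finset.sum_add_distrib, qap]
    exact Finset.sum_congr rfl fun x _ => by ring
  linarith

/-- Poincare-type hypothesis: spectral bound. -/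
def Spec (P : Matrix V V ℝ) (l : ℝ) : Prop :=
  ∀ f : V → ℝ, ∑ x, f x = 0 → ∑ x, f x * ap P f x ≤ l * ∑ x, f x ^ 2

lemma spec_energy (h : Lazy P) {l : ℝ} (hs : Spec P l) [Nonempty V] (f : V → ℝ) (A : ℝ)
    (hA : ∑ x, f x = Fintype.card V * A) :
    (1 - l) * ∑ x, (f x - A) ^ 2 ≤ ∑ x, f x * (f x - ap P f x) := by
  have h0 : ∑ x, (f x - A) = 0 := by
    rw [Finset.sum_sub_distrib, hA]; simp
  have h1 := hs (fun x => f x - A) h0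
  simp only [ap_sub_const h] at h1
  have h2 : ∑ x, f x * (f x - ap P f x) =
      ∑ x, (f x - A) ^ 2 - ∑ x, (f x - A) * (ap P f x - A) := by
    have : ∑ x, (f x - ap P f x) = 0 := by
      rw [Finset.sum_sub_distrib, sum_ap h, sub_self]
    rw [← Finset.sum_sub_distrib]
    have e : ∀ x, (f x - A) ^ 2 - (f x - A) * (ap P f x - A) =
      f x * (f x - ap P f x) - A * (f x - ap P f x) := fun x => by ring
    simp only [e]
    rw [Finset.sum_sub_distrib, ← Finset.mul_sum, this]; ring
  rw [h2]; linarith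

lemma exists_w (h : Lazy P) {l : ℝ} (hl : l < 1) (hs : Spec P l) [Nonempty V]
    (S : Set V) (hS : S.Nonempty) :
    ∃ w : V → ℝ, (∀ x ∈ S, w x = 0) ∧ ∀ x, x ∉ S → w x = 1 + ap P w x := by
  classical
  let L : (V → ℝ) →ₗ[ℝ] (V → ℝ) :=
    { toFun := fun v x => if x ∈ S then v x else v x - ap P v x
      map_add' := by
        intro u v; funext x
        by_cases hx : x ∈ S <;> simp [hx, ap, mul_add, Finset.sum_add_distrib]; ring
      map_smul' := by
        intro c v; funext x
        by_cases hx : x ∈ S <;> simp [hx, ap, mul_left_comm _ c, ← Finset.mul_sum]; ring }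
  have hL : ∀ v x, L v x = if x ∈ S then v x else v x - ap P v x := fun v x => rfl
  have inj : Function.Injective L := by
    rw [← LinearMap.ker_eq_bot, LinearMap.ker_eq_bot']
    intro v hv
    have hv' : ∀ x, (if x ∈ S then v x else v x - ap P v x) = 0 := fun x => by
      rw [← hL, hv]; rfl
    have hz : ∑ x, v x * (v x - ap P v x) = 0 := by
      refine Finset.sum_eq_zero fun x _ => ?_
      have := hv' x
      by_cases hx : x ∈ S
      · rw [if_pos hx] at this; simp [this]
      · rw [if_neg hx] at this; simp [this]
    have hN : (Fintype.card V : ℝ) ≠ 0 := by simp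
    have h1 := spec_energy h hs v ((∑ x, v x) / Fintype.card V) (by field_simp)
    rw [hz] at h1
    have h2 : ∑ x, (v x - (∑ x, v x) / Fintype.card V) ^ 2 = 0 := by
      apply le_antisymm
      · by_contra hc
        push Not at hc
        have := mul_pos (sub_pos.2 hl) hc
        linarith
      · exact Finset.sum_nonneg fun x _ => sq_nonneg _
    rw [Finset.sum_eq_zero_iff_of_nonneg (fun x _ => sq_nonneg _)] at h2
    obtain ⟨s, hs⟩ := hS
    have h3 := hv' s
    rw [if_pos hs] at h3
    have h4 := h2 s (Finset.mem_univ _)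
    funext x
    have h5 := h2 x (Finset.mem_univ _)
    rw [pow_eq_zero_iff (by norm_num)] at h4 h5
    simp only [Pi.zero_apply]
    linarith
  obtain ⟨w, hw⟩ := (LinearMap.injective_iff_surjective.1 inj) (fun x => if x ∈ S then 0 else 1)
  have hw' : ∀ x, (if x ∈ S then w x else w x - ap P w x) = if x ∈ S then 0 else 1 := fun x => by
    rw [← hL, hw]
  refine ⟨w, fun x hx => ?_, fun x hx => ?_⟩
  · simpa [hx] using hw' x
  · have := hw' x
    rw [if_neg hx, if_neg hx] at this; linarith

lemma w_nonneg (h : Lazy P) [Nonempty V] (S : Set V) (w : V → ℝ) (h0 : ∀ x ∈ S, w x = 0)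
    (h1 : ∀ x, x ∉ S → w x = 1 + ap P w x) (x : V) : 0 ≤ w x := by
  obtain ⟨m, hm⟩ := Finite.exists_min w
  refine le_trans ?_ (hm x)
  by_cases hmS : m ∈ S
  · rw [h0 m hmS]
  · exfalso
    have h2 := h1 m hmS
    have h3 := ap_mono h (f := fun _ => w m) hm m
    simp only [ap, ← Finset.sum_mul, h.row] at h2 h3
    linarith

lemma decay (h : Lazy P) {l : ℝ} (hl0 : 0 ≤ l) (hs : Spec P l) [Nonempty V] (w : V → ℝ)
    (A : ℝ) (hA : ∑ x, w x = Fintype.card V * A) (hw : ∀ x, w x ≤ 1 + ap P w x) (t : ℕ) :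
    ∃ v : V → ℝ, (∀ x, w x ≤ t + v x) ∧ ∑ x, v x = Fintype.card V * A ∧
      ∑ x, (v x - A) ^ 2 ≤ l ^ t * ∑ x, (w x - A) ^ 2 := by
  induction t with
  | zero => exact ⟨w, by simp, hA, by simp⟩
  | succ t ih =>
    obtain ⟨v, h1, h2, h3⟩ := ih
    refine ⟨ap P v, fun x => ?_, by rw [sum_ap h, h2], ?_⟩
    · have a := ap_mono h h1 x
      have b : ap P (fun y => t + v y) x = t + ap P v x := by
        have := ap_sub_const h v (-t) x
        simp only [sub_neg_eq_add] at this
        rw [add_comm (t : ℝ), ← this]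
        congr 1; funext y; ring
      have c := hw x
      push_cast
      linarith
    · have h0 : ∑ x, (v x - A) = 0 := by
        rw [Finset.sum_sub_distrib, h2]; simp
      have a := contr h (fun x => v x - A)
      have b := hs (fun x => v x - A) h0
      simp only [ap_sub_const h] at a b
      calc _ ≤ l * ∑ x, (v x - A) ^ 2 := a.trans b
        _ ≤ l * (l ^ t * ∑ x, (w x - A) ^ 2) := mul_le_mul_of_nonneg_left h3 hl0
        _ = _ := by ring

lemma w_bound (h : Lazy P) {l : ℝ} (hl0 : 0 ≤ l) (hl : l < 1) (hs : Spec P l) [Nonempty V]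
    (S : Set V) (hS : S.Nonempty) (w : V → ℝ) (h0 : ∀ x ∈ S, w x = 0)
    (h1 : ∀ x, x ∉ S → w x = 1 + ap P w x) (x : V) :
    w x ≤ (Real.log (Fintype.card V) + 1 + 2 * (Fintype.card V / S.ncard)) / (1 - l) := by
  classical
  set N : ℝ := (Fintype.card V : ℝ) with hN
  have hN0 : 0 < N := by rw [hN]; exact_mod_cast Fintype.card_pos
  have hN1 : 1 ≤ N := by rw [hN]; exact_mod_cast Fintype.card_pos
  have hg : 0 < 1 - l := by linarith
  have hnn := w_nonneg h S w h0 h1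
  set A := (∑ x, w x) / N with hA
  have hsum : ∑ x, w x = N * A := by rw [hA]; field_simp
  have hA0 : 0 ≤ A := div_nonneg (Finset.sum_nonneg fun x _ => hnn x) hN0.le
  have hk0 : 0 < (S.ncard : ℝ) := by
    exact_mod_cast (Set.ncard_pos (Set.toFinite S)).2 hS
  have hkN : (S.ncard : ℝ) ≤ N := by
    rw [hN, ← Nat.card_eq_fintype_card]
    exact_mod_cast Set.ncard_le_card S
  set k : ℝ := (S.ncard : ℝ) with hk
  have hE : ∑ x, w x * (w x - ap P w x) = N * A := by
    rw [← hsum]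
    refine Finset.sum_congr rfl fun x _ => ?_
    by_cases hx : x ∈ S
    · simp [h0 x hx]
    · have := h1 x hx
      have e : w x - ap P w x = 1 := by linarith
      rw [e, mul_one]
  have hvar := spec_energy h hs w A hsum
  rw [hE] at hvar
  have hvarS : k * A ^ 2 ≤ ∑ x, (w x - A) ^ 2 := by
    calc k * A ^ 2 = ∑ x ∈ S.toFinset, (w x - A) ^ 2 := by
          rw [Finset.sum_congr rfl (g := fun _ => A ^ 2) (fun x hx => by
            rw [h0 x (by simpa using hx)]; ring)]
          rw [Finset.sum_const, nsmul_eq_mul, hk, Set.ncard_eq_toFinset_card']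
      _ ≤ _ := Finset.sum_le_univ_sum_of_nonneg fun x => sq_nonneg _
  set R := N / k with hR
  have hR1 : 1 ≤ R := by rw [hR, one_le_div hk0]; exact hkN
  have hNR : N = k * R := by rw [hR]; field_simp
  have hAR : A * (1 - l) ≤ R := by
    by_contra hc
    push Not at hc
    have hApos : 0 < A := by
      by_contra hA'
      have : A = 0 := le_antisymm (not_lt.1 hA') hA0
      rw [this] at hc; linarith
    have : (1 - l) * (k * A ^ 2) ≤ N * A :=
      (mul_le_mul_of_nonneg_left hvarS hg.le).trans hvar
    rw [hNR] at this
    have h5 : 0 < (k * A) * (A * (1 - l) - R) := mul_pos (mul_pos hk0 hApos) (by linarith)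
    nlinarith
  obtain ⟨t, ht1, ht2⟩ : ∃ t : ℕ, Real.log N / (1 - l) ≤ t ∧ (t : ℝ) ≤ Real.log N / (1 - l) + 1 :=
    ⟨⌈Real.log N / (1 - l)⌉₊, Nat.le_ceil _,
      (Nat.ceil_lt_add_one (div_nonneg (Real.log_nonneg hN1) hg.le)).le⟩
  have hlt : l ^ t * N ≤ 1 := by
    have a : l ≤ Real.exp (-(1 - l)) := by
      have := Real.add_one_le_exp (-(1 - l)); linarith
    have b : l ^ t ≤ Real.exp (-(1 - l)) ^ t := pow_le_pow_left₀ hl0 a t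
    rw [← Real.exp_nat_mul] at b
    have c : Real.exp (t * -(1 - l)) ≤ Real.exp (- Real.log N) := by
      apply Real.exp_le_exp.2
      rw [div_le_iff₀ hg] at ht1
      linarith
    rw [Real.exp_neg, Real.exp_log hN0] at c
    calc l ^ t * N ≤ N⁻¹ * N := mul_le_mul_of_nonneg_right (b.trans c) hN0.le
      _ = 1 := inv_mul_cancel₀ hN0.ne'
  obtain ⟨v, hv1, hv2, hv3⟩ := decay h hl0 hs w A hsum (fun y => by
    by_cases hy : y ∈ S
    · rw [h0 y hy]
      have : 0 ≤ ap P w y := Finset.sum_nonneg fun z _ => mul_nonneg (h.nn _ _) (hnn z)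
      linarith
    · exact (h1 y hy).le) t
  have hvx : (v x - A) ^ 2 ≤ ∑ x, (v x - A) ^ 2 :=
    Finset.single_le_sum (f := fun x => (v x - A) ^ 2) (fun y _ => sq_nonneg _) (Finset.mem_univ x)
  have hfin : (v x - A) ^ 2 * (1 - l) ^ 2 ≤ R ^ 2 := by
    have lt0 : 0 ≤ l ^ t := pow_nonneg hl0 t
    have s1 : (v x - A) ^ 2 * (1 - l) ≤ A := by
      calc (v x - A) ^ 2 * (1 - l) ≤ (l ^ t * ∑ x, (w x - A) ^ 2) * (1 - l) :=
            mul_le_mul_of_nonneg_right (hvx.trans hv3) hg.le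
        _ = l ^ t * ((1 - l) * ∑ x, (w x - A) ^ 2) := by ring
        _ ≤ l ^ t * (N * A) := mul_le_mul_of_nonneg_left hvar lt0
        _ = (l ^ t * N) * A := by ring
        _ ≤ 1 * A := mul_le_mul_of_nonneg_right hlt hA0
        _ = A := one_mul A
    calc (v x - A) ^ 2 * (1 - l) ^ 2 = ((v x - A) ^ 2 * (1 - l)) * (1 - l) := by ring
      _ ≤ A * (1 - l) := mul_le_mul_of_nonneg_right s1 hg.le
      _ ≤ R := hAR
      _ ≤ R ^ 2 := by nlinarith
  have hfin2 : (v x - A) * (1 - l) ≤ R := by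
    rw [← mul_pow] at hfin
    exact le_of_sq_le_sq hfin (by linarith)
  rw [le_div_iff₀ hg]
  have a := hv1 x
  have b : (t : ℝ) * (1 - l) ≤ Real.log N + (1 - l) := by
    calc (t : ℝ) * (1 - l) ≤ (Real.log N / (1 - l) + 1) * (1 - l) :=
          mul_le_mul_of_nonneg_right ht2 hg.le
      _ = _ := by field_simp
  have c : w x * (1 - l) ≤ (t + v x) * (1 - l) := mul_le_mul_of_nonneg_right a hg.le
  nlinarith

/-- The bound on the total mass of the harmonic function. -/
lemma g_bound (h : Lazy P) {l : ℝ} (hl0 : 0 ≤ l) (hl : l < 1) (hs : Spec P l) [Nonempty V]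
    (S : Set V) (hS : S.Nonempty) (x : V) (hx : x ∈ S) (g : V → ℝ)
    (g0 : ∀ y ∈ S, g y = if y = x then 1 else 0) (g1 : ∀ y, y ∉ S → g y = ap P g y) :
    ∑ y, g y ≤ 1 + (Real.log (Fintype.card V) + 1 + 2 * (Fintype.card V / S.ncard)) / (1 - l) := by
  obtain ⟨w, w0, w1⟩ := exists_w h hl hs S hS
  have hb := w_bound h hl0 hl hs S hS w w0 w1
  have e1 : ∑ y, (g y - ap P g y) * w y = 0 := by
    refine Finset.sum_eq_zero fun y _ => ?_
    by_cases hy : y ∈ S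
    · simp [w0 y hy]
    · have := g1 y hy
      rw [← this]; simp
  have e2 : ∑ y, g y * (w y - ap P w y) = 0 := by
    rw [← e1]
    simp only [mul_sub, sub_mul, Finset.sum_sub_distrib, ap_symm h]
  have e3 : ∀ y, g y * (w y - ap P w y) = g y - if y = x then 1 + ap P w x else 0 := by
    intro y
    by_cases hy : y ∈ S
    · rw [w0 y hy, g0 y hy]
      by_cases hyx : y = x
      · subst hyx; simp
      · simp [hyx]
    · have : y ≠ x := fun hh => hy (hh ▸ hx)
      have h5 := w1 y hy
      have e : w y - ap P w y = 1 := by linarith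
      simp [this, e]
  simp only [e3, Finset.sum_sub_distrib, Finset.sum_ite_eq', Finset.mem_univ, if_true] at e2
  have h7 := ap_mono h hb x
  have h8 : ap P (fun _ : V => (Real.log (Fintype.card V) + 1 +
      2 * (Fintype.card V / S.ncard)) / (1 - l)) x = (Real.log (Fintype.card V) + 1 +
      2 * ((Fintype.card V : ℝ) / S.ncard)) / (1 - l) := by
    simp only [ap, ← Finset.sum_mul, h.row, one_mul]
  linarith

lemma u_bound (h : Lazy P) {l : ℝ} (hl : l < 1) (hs : Spec P l) [Nonempty V]
    (x y : V) (hxy : x ≠ y) (g : V → ℝ) (gx : g x = 0) (gy : g y = 1)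
    (g1 : ∀ z, z ≠ x → z ≠ y → g z = ap P g z) : (1 - l) / 2 ≤ ap P g x := by
  have hN : (Fintype.card V : ℝ) ≠ 0 := by simp
  set A := (∑ z, g z) / Fintype.card V with hA
  have h1 := spec_energy h hs g A (by rw [hA]; field_simp)
  have h2 : ∑ z, g z * (g z - ap P g z) = 1 - ap P g y := by
    rw [Finset.sum_eq_single y]
    · rw [gy, one_mul]
    · intro z _ hz
      by_cases hzx : z = x
      · rw [hzx, gx, zero_mul]
      · rw [← g1 z hzx hz]; simp
    · simp
  have h3 : ∑ z, (g z - ap P g z) = (g x - ap P g x) + (g y - ap P g y) := by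
    rw [← Finset.sum_pair (f := fun z => g z - ap P g z) hxy]
    refine (Finset.sum_subset (Finset.subset_univ _) fun z _ hz => ?_).symm
    simp only [Finset.mem_insert, Finset.mem_singleton, not_or] at hz
    rw [← g1 z hz.1 hz.2]; simp
  rw [Finset.sum_sub_distrib, sum_ap h, sub_self, gx, gy] at h3
  have h4 : (g x - A) ^ 2 + (g y - A) ^ 2 ≤ ∑ z, (g z - A) ^ 2 := by
    rw [← Finset.sum_pair (f := fun z => (g z - A) ^ 2) hxy]
    exact Finset.sum_le_univ_sum_of_nonneg fun z => sq_nonneg _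
  rw [gx, gy] at h4
  have h5 : 1 / 2 ≤ ∑ z, (g z - A) ^ 2 := by nlinarith [sq_nonneg (2 * A - 1)]
  have h6 : (1 - l) * (1 / 2) ≤ (1 - l) * ∑ z, (g z - A) ^ 2 :=
    mul_le_mul_of_nonneg_left h5 (by linarith)
  linarith

end Analytic

section Gap

set_option linter.unusedSectionVars false

variable {V : Type*} [Fintype V] [DecidableEq V] {P : Matrix V V ℝ}

lemma lam_eq (P : Matrix V V ℝ) [Nonempty V] :
    lam P (fun _ => ((Fintype.card V : ℝ))⁻¹) =
      sSup ((fun f : V → ℝ => |(Fintype.card V : ℝ)⁻¹ * ∑ x, f x * ap P f x|) ''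
        {f | ∑ x, f x = 0 ∧ ∑ x, f x ^ 2 = Fintype.card V}) := by
  have hN : (Fintype.card V : ℝ) ≠ 0 := by simp
  unfold lam
  congr 1
  ext r
  simp only [Set.mem_setOf_eq, Set.mem_image, ← Finset.mul_sum, ap]
  constructor
  · rintro ⟨f, h1, h2, h3⟩
    refine ⟨f, ⟨?_, ?_⟩, h3.symm⟩
    · simpa [hN] using h1
    · field_simp at h2; exact h2
  · rintro ⟨f, ⟨h1, h2⟩, h3⟩
    refine ⟨f, ?_, ?_, h3.symm⟩
    · rw [h1, mul_zero]
    · rw [h2]; field_simp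

lemma lam_nonneg (P : Matrix V V ℝ) (pi : V → ℝ) : 0 ≤ lam P pi := by
  apply Real.sSup_nonneg
  rintro r ⟨f, _, _, rfl⟩
  exact abs_nonneg _

lemma quad_nonneg (h : Lazy P) (f : V → ℝ) : 0 ≤ ∑ x, f x * ap P f x :=
  (Finset.sum_nonneg fun x _ => sq_nonneg _).trans (contr h f)

lemma lam_spec (h : Lazy P) [Nonempty V] : Spec P (lam P (fun _ => ((Fintype.card V : ℝ))⁻¹)) := by
  have hN : (0 : ℝ) < Fintype.card V := by exact_mod_cast Fintype.card_pos
  intro f hf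
  set q := ∑ x, f x ^ 2 with hq
  have hq0 : 0 ≤ q := Finset.sum_nonneg fun x _ => sq_nonneg _
  rcases hq0.eq_or_lt with h0 | hpos
  · have := energy_nn h f
    rw [← h0]; linarith
  set N : ℝ := (Fintype.card V : ℝ) with hNdef
  set c := Real.sqrt (N / q) with hc
  have hc2 : c ^ 2 = N / q := Real.sq_sqrt (by positivity)
  have e1 : ∑ x, (c * f x) * ap P (fun y => c * f y) x = c ^ 2 * ∑ x, f x * ap P f x := by
    rw [Finset.mul_sum]
    refine Finset.sum_congr rfl fun x _ => ?_
    simp only [ap, mul_left_comm _ c, ← Finset.mul_sum]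
    ring
  have hle : N⁻¹ * ∑ x, (c * f x) * ap P (fun y => c * f y) x ≤ lam P (fun _ => N⁻¹) := by
    refine (le_abs_self _).trans ?_
    rw [hNdef, lam_eq]
    refine le_csSup ⟨1, ?_⟩ ⟨fun y => c * f y, ⟨?_, ?_⟩, rfl⟩
    · rintro r ⟨g, ⟨_, hg⟩, rfl⟩
      have a := quad_nonneg h g
      have b := energy_nn h g
      rw [hg] at b
      simp only
      rw [abs_of_nonneg (by positivity), inv_mul_le_iff₀ hN]
      linarith
    · rw [← Finset.mul_sum, hf, mul_zero]
    · simp only [mul_pow, ← Finset.mul_sum, hc2, ← hq]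
      field_simp
      exact hNdef
  rw [e1, hc2] at hle
  have : N⁻¹ * (N / q * ∑ x, f x * ap P f x) = (∑ x, f x * ap P f x) / q := by
    field_simp
  rw [this, div_le_iff₀ hpos] at hle
  exact hle

lemma lam_lt_one (h : Lazy P) [Nonempty V]
    (hc : ∀ f : V → ℝ, (∀ x y, P x y ≠ 0 → f x = f y) → ∀ x y, f x = f y) :
    lam P (fun _ => ((Fintype.card V : ℝ))⁻¹) < 1 := by
  have hN : (0 : ℝ) < Fintype.card V := by exact_mod_cast Fintype.card_pos
  rw [lam_eq]
  set K : Set (V → ℝ) := {f | ∑ x, f x = 0 ∧ ∑ x, f x ^ 2 = Fintype.card V} with hK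
  rcases K.eq_empty_or_nonempty with he | hne
  · rw [he]; simp
  have hcomp : IsCompact K := by
    refine Metric.isCompact_of_isClosed_isBounded ?_ ?_
    · refine IsClosed.inter (isClosed_eq (by fun_prop) (by fun_prop))
        (isClosed_eq (by fun_prop) (by fun_prop))
    · refine (Metric.isBounded_closedBall (x := (0 : V → ℝ)) (r := Fintype.card V)).subset ?_
      rintro f ⟨_, hf⟩
      rw [mem_closedBall_zero_iff, pi_norm_le_iff_of_nonneg hN.le]
      intro x
      have h1 : f x ^ 2 ≤ Fintype.card V := by
        rw [← hf]
        exact Finset.single_le_sum (f := fun x => f x ^ 2) (fun y _ => sq_nonneg _)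
          (Finset.mem_univ x)
      have h2 : (1 : ℝ) ≤ Fintype.card V := by exact_mod_cast Fintype.card_pos
      rw [Real.norm_eq_abs]
      apply abs_le_of_sq_le_sq _ hN.le
      nlinarith
  rw [hcomp.sSup_lt_iff_of_continuous hne]
  · rintro f ⟨f0, f1⟩
    rw [abs_of_nonneg (mul_nonneg (by positivity) (quad_nonneg h f)), inv_mul_lt_iff₀ hN, mul_one]
    refine lt_of_le_of_ne (f1 ▸ energy_nn h f) fun heq => ?_
    have he := energy h f
    rw [heq, f1, sub_self] at he
    have hz : ∑ x, ∑ y, P x y * (f x - f y) ^ 2 = 0 := by linarith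
    have nn : ∀ x y, 0 ≤ P x y * (f x - f y) ^ 2 := fun x y => mul_nonneg (h.nn x y) (sq_nonneg _)
    rw [Finset.sum_eq_zero_iff_of_nonneg (fun x _ => Finset.sum_nonneg fun y _ => nn x y)] at hz
    have hconst := hc f (fun x y hxy => by
      have h2 := hz x (Finset.mem_univ _)
      rw [Finset.sum_eq_zero_iff_of_nonneg (fun y _ => nn x y)] at h2
      have h3 := h2 y (Finset.mem_univ _)
      rcases mul_eq_zero.1 h3 with h4 | h4
      · exact absurd h4 hxy
      · have := pow_eq_zero_iff (by norm_num) |>.1 h4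
        linarith)
    obtain ⟨a⟩ := ‹Nonempty V›
    have hfa : ∀ x, f x = f a := fun x => hconst x a
    simp only [hfa, Finset.sum_const, nsmul_eq_mul, Finset.card_univ] at f0 f1
    rcases mul_eq_zero.1 f0 with h5 | h5
    · exact hN.ne' h5
    · rw [h5] at f1
      norm_num at f1
      linarith
  · simp only [ap]
    fun_prop

end Gap

section Srw

variable {V : Type*} [Fintype V] [DecidableEq V]

lemma srw_lazy (H : SimpleGraph V) [DecidableRel H.Adj] (d : ℕ) (hd : 0 < d)
    (hreg : H.IsRegularOfDegree d) : Lazy (lazySRW H d) where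
  nn x y := by
    simp only [lazySRW, Matrix.of_apply]
    split_ifs <;> positivity
  row x := by
    have e : ∀ y, lazySRW H d x y = (if y = x then 1 / 2 else 0) +
        (if H.Adj x y then 1 / (2 * (d : ℝ)) else 0) := by
      intro y
      simp only [lazySRW, Matrix.of_apply]
      by_cases hy : y = x
      · subst hy; simp
      · simp [hy]
    simp only [e, Finset.sum_add_distrib]
    rw [← Finset.sum_filter (p := fun y => H.Adj x y)]
    have : (Finset.univ.filter fun y => H.Adj x y) = H.neighborFinset x := by
      ext y; simp
    rw [this, Finset.sum_const, SimpleGraph.card_neighborFinset_eq_degree, hreg x]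
    have : (d : ℝ) ≠ 0 := by positivity
    simp
    field_simp
    norm_num
  symm x y := by
    simp only [lazySRW, Matrix.of_apply, H.adj_comm x y, eq_comm]
  diag x := by simp [lazySRW]

lemma srw_conn (H : SimpleGraph V) [DecidableRel H.Adj] (d : ℕ) (hd : 0 < d)
    (hc : H.Connected) (f : V → ℝ) (hf : ∀ x y, lazySRW H d x y ≠ 0 → f x = f y) (x y : V) :
    f x = f y := by
  obtain ⟨p⟩ := hc.preconnected x y
  induction p with
  | nil => rfl
  | cons hadj p ih =>
    rw [← ih]
    apply hf
    have : (d : ℝ) ≠ 0 := by positivity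
    simp [lazySRW, hadj, hadj.ne', this]

end Srw

section Prob

set_option linter.unusedSectionVars false

variable {V : Type*} [Fintype V] [DecidableEq V] [MeasurableSpace V] [MeasurableSingletonClass V]

lemma meas_ext (ν₁ ν₂ : Measure (ℕ → V)) [IsFiniteMeasure ν₁]
    (h : ∀ (t : ℕ) (w : ℕ → V), ν₁ {ω | ∀ i ≤ t, ω i = w i} = ν₂ {ω | ∀ i ≤ t, ω i = w i}) :
    ν₁ = ν₂ := by
  have key : ∀ n, ν₂.map (Preorder.frestrictLe (π := fun _ : ℕ => V) n)
      = ν₁.map (Preorder.frestrictLe (π := fun _ : ℕ => V) n) := by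
    intro n
    apply Measure.ext_of_singleton
    intro a
    rw [Measure.map_apply (by fun_prop) (measurableSet_singleton a),
      Measure.map_apply (by fun_prop) (measurableSet_singleton a)]
    let w : ℕ → V := fun i => if hi : i ≤ n then a ⟨i, by simpa using hi⟩
      else a ⟨n, by simp⟩
    have : (Preorder.frestrictLe (π := fun _ : ℕ => V) n) ⁻¹' {a} = {ω | ∀ i ≤ n, ω i = w i} := by
      ext ω
      simp only [Set.mem_preimage, Set.mem_singleton_iff, Set.mem_setOf_eq, funext_iff]
      constructor
      · intro hh i hi
        simp only [w, dif_pos hi]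
        exact hh ⟨i, by simpa using hi⟩
      · rintro hh ⟨i, hi⟩
        have hi' : i ≤ n := by simpa using hi
        have := hh i hi'
        simp only [w, dif_pos hi'] at this
        exact this
    rw [this, h]
  let Pf : (I : Finset ℕ) → Measure (I → V) := fun I => ν₁.map I.restrict
  have hPf : IsProjectiveLimit (α := fun _ : ℕ => V) ν₁ Pf := fun I => rfl
  have hfam : IsProjectiveMeasureFamily (α := fun _ : ℕ => V) Pf := by
    intro I J hJI
    simp only [Pf]
    rw [Measure.map_map (by fun_prop) (by fun_prop)]
    rfl
  have h2 : IsProjectiveLimit (α := fun _ : ℕ => V) ν₂ Pf := (isProjectiveLimit_nat_iff hfam ν₂).2 key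
  exact hPf.unique h2

/-- The shift. -/
def sh (ω : ℕ → V) : ℕ → V := fun n => ω (n + 1)

lemma meas_sh : Measurable (sh (V := V)) := by
  unfold sh; fun_prop

variable {P : Matrix V V ℝ} {μ : V → Measure (ℕ → V)}

lemma start (hμ : IsMarkovChain P μ) (x : V) : ∀ᵐ ω ∂(μ x), ω 0 = x := by
  have := hμ.1 x
  have h := hμ.2 x 0 (fun _ => x)
  simp only [Nat.le_zero, forall_eq, if_true, Finset.range_zero, Finset.prod_empty, mul_one,
    ENNReal.ofReal_one] at h
  have hm : MeasurableSet {ω : ℕ → V | ω 0 = x} :=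
    measurableSet_eq_fun (measurable_pi_apply 0) measurable_const
  rw [← prob_compl_eq_zero_iff hm] at h
  exact h

lemma markov (hP : ∀ x y, 0 ≤ P x y) (hμ : IsMarkovChain P μ) (x : V) :
    (μ x).map sh = ∑ z, ENNReal.ofReal (P x z) • μ z := by
  have := hμ.1 x
  have := Measure.isProbabilityMeasure_map (μ := μ x) (meas_sh (V := V)).aemeasurable
  apply meas_ext
  intro t w
  have hm : MeasurableSet {ω : ℕ → V | ∀ i ≤ t, ω i = w i} := by
    have : {ω : ℕ → V | ∀ i ≤ t, ω i = w i} = ⋂ i, ⋂ (_ : i ≤ t), {ω | ω i = w i} := by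
      ext; simp
    rw [this]
    exact MeasurableSet.iInter fun i => MeasurableSet.iInter fun _ =>
      measurableSet_eq_fun (measurable_pi_apply i) measurable_const
  rw [Measure.map_apply meas_sh hm]
  let w' : ℕ → V := fun n => Nat.casesOn n x w
  have e : μ x (sh ⁻¹' {ω | ∀ i ≤ t, ω i = w i}) = μ x {ω | ∀ i ≤ t + 1, ω i = w' i} := by
    apply measure_congr
    filter_upwards [start hμ x] with ω hω
    apply propext
    change (∀ i ≤ t, ω (i + 1) = w i) ↔ (∀ i ≤ t + 1, ω i = w' i)
    constructor
    · intro hh i hi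
      cases i with
      | zero => exact hω
      | succ i => exact hh i (by omega)
    · intro hh i hi
      exact hh (i + 1) (by omega)
  rw [e, hμ.2 x (t + 1) w', Finset.prod_range_succ']
  have hr : ∀ z, (ENNReal.ofReal (P x z) • μ z) {ω | ∀ i ≤ t, ω i = w i} =
      if z = w 0 then ENNReal.ofReal (P x z *
        ∏ i ∈ Finset.range t, P (w i) (w (i + 1))) else 0 := by
    intro z
    rw [Measure.smul_apply, hμ.2 z t w, smul_eq_mul, ← ENNReal.ofReal_mul (hP _ _)]
    by_cases hz : z = w 0
    · simp [hz]
    · simp [hz, Ne.symm hz]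
  rw [Measure.finsetSum_apply]
  simp only [hr, Finset.sum_ite_eq', Finset.mem_univ, if_true]
  congr 1
  have e0 : w' 0 = x := rfl
  have e1 : ∀ n, w' (n + 1) = w n := fun n => rfl
  simp only [e0, e1, if_true, one_mul]
  rw [mul_comm]

lemma hit_eq_iff (S : Set V) (ω : ℕ → V) (n : ℕ) :
    hit S ω = n ↔ ω n ∈ S ∧ ∀ m < n, ω m ∉ S := by
  unfold hit
  constructor
  · intro h
    have hne : (((↑) : ℕ → ℕ∞) '' {n : ℕ | ω n ∈ S}).Nonempty := by
      by_contra hc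
      rw [Set.not_nonempty_iff_eq_empty] at hc
      rw [hc, sInf_empty] at h
      exact absurd h.symm (ENat.coe_ne_top n)
    have hmem := csInf_mem hne
    rw [h] at hmem
    obtain ⟨m, hm, hmn⟩ := hmem
    have : m = n := by exact_mod_cast hmn
    subst this
    refine ⟨hm, fun k hk hkS => ?_⟩
    have : sInf (((↑) : ℕ → ℕ∞) '' {n : ℕ | ω n ∈ S}) ≤ (k : ℕ∞) := sInf_le ⟨k, hkS, rfl⟩
    rw [h] at this
    have : m ≤ k := by exact_mod_cast this
    omega
  · rintro ⟨h1, h2⟩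
    apply le_antisymm
    · exact sInf_le ⟨n, h1, rfl⟩
    · apply le_sInf
      rintro _ ⟨m, hm, rfl⟩
      have : n ≤ m := not_lt.1 fun hlt => h2 m hlt hm
      exact_mod_cast this

lemma mem_hitsAt (S : Set V) (x : V) (ω : ℕ → V) :
    ω ∈ hitsAt S x ↔ ∃ n, (ω n ∈ S ∧ ∀ m < n, ω m ∉ S) ∧ ω n = x := by
  simp only [hitsAt, Set.mem_setOf_eq, hit_eq_iff]

lemma meas_hitsAt (S : Set V) (x : V) : MeasurableSet (hitsAt S x) := by
  have hA : ∀ (T : Set V) n, MeasurableSet {ω : ℕ → V | ω n ∈ T} := fun T n =>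
    (measurable_pi_apply n) T.toFinite.measurableSet
  have : hitsAt S x = ⋃ n, (({ω : ℕ → V | ω n ∈ S} ∩ ⋂ m, ⋂ (_ : m < n), {ω | ω m ∈ Sᶜ}) ∩
      {ω | ω n ∈ ({x} : Set V)}) := by
    ext ω
    rw [mem_hitsAt]
    simp
  rw [this]
  exact MeasurableSet.iUnion fun n => ((hA _ _).inter (MeasurableSet.iInter fun m =>
    MeasurableSet.iInter fun _ => hA _ _)).inter (hA _ _)

lemma sh_prob (hP : ∀ x y, 0 ≤ P x y) (hμ : IsMarkovChain P μ) (S : Set V) (y x : V) :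
    (μ y (sh ⁻¹' hitsAt S x)).toReal = ap P (fun z => harm μ S z x) y := by
  have hfin : ∀ z, μ z (hitsAt S x) ≠ ∞ := fun z => by
    have := hμ.1 z
    exact measure_ne_top _ _
  rw [← Measure.map_apply meas_sh (meas_hitsAt S x), markov hP hμ, Measure.finsetSum_apply,
    ENNReal.toReal_sum]
  · refine Finset.sum_congr rfl fun z _ => ?_
    rw [Measure.smul_apply, smul_eq_mul, ENNReal.toReal_mul, ENNReal.toReal_ofReal (hP _ _)]
    rfl
  · intro z _
    rw [Measure.smul_apply, smul_eq_mul]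
    exact ENNReal.mul_ne_top ENNReal.ofReal_ne_top (hfin z)

lemma harm_in (hμ : IsMarkovChain P μ) (S : Set V) (x y : V) (hy : y ∈ S) :
    harm μ S y x = if y = x then 1 else 0 := by
  have := hμ.1 y
  have key : ∀ᵐ ω ∂(μ y), ω ∈ hitsAt S x ↔ y = x := by
    filter_upwards [start hμ y] with ω hω
    rw [mem_hitsAt]
    constructor
    · rintro ⟨n, ⟨_, h2⟩, h3⟩
      have : n = 0 := by
        by_contra hn
        exact h2 0 (by omega) (hω ▸ hy)
      subst this
      rw [← hω, h3]
    · intro h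
      exact ⟨0, ⟨by rw [hω]; exact hy, by simp⟩, by rw [hω, h]⟩
  unfold harm
  by_cases hyx : y = x
  · have : μ y (hitsAt S x) = μ y Set.univ := measure_congr (by
      filter_upwards [key] with ω hω
      exact propext ⟨fun _ => trivial, fun _ => hω.2 hyx⟩)
    rw [this, measure_univ, if_pos hyx, ENNReal.toReal_one]
  · have : μ y (hitsAt S x) = μ y ∅ := measure_congr (by
      filter_upwards [key] with ω hω
      exact propext ⟨fun h => hyx (hω.1 h), fun h => h.elim⟩)
    rw [this, measure_empty, if_neg hyx, ENNReal.toReal_zero]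

lemma harm_out (hP : ∀ x y, 0 ≤ P x y) (hμ : IsMarkovChain P μ) (S : Set V) (x y : V)
    (hy : y ∉ S) : harm μ S y x = ap P (fun z => harm μ S z x) y := by
  rw [← sh_prob hP hμ]
  unfold harm
  congr 1
  apply measure_congr
  filter_upwards [start hμ y] with ω hω
  apply propext
  change ω ∈ hitsAt S x ↔ sh ω ∈ hitsAt S x
  rw [mem_hitsAt, mem_hitsAt]
  constructor
  · rintro ⟨n, ⟨h1, h2⟩, h3⟩
    cases n with
    | zero => exact absurd (hω ▸ h1) hy
    | succ n => exact ⟨n, ⟨h1, fun m hm => h2 (m + 1) (by omega)⟩, h3⟩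
  · rintro ⟨n, ⟨h1, h2⟩, h3⟩
    refine ⟨n + 1, ⟨h1, fun m hm => ?_⟩, h3⟩
    cases m with
    | zero => rw [hω]; exact hy
    | succ m => exact h2 m (by omega)

lemma u_event (hP : ∀ x y, 0 ≤ P x y) (hμ : IsMarkovChain P μ) (x y : V) (hxy : x ≠ y) :
    (μ x {ω | hit {y} ω < hitPlus {x} ω}).toReal =
      ap P (fun z => harm μ {x, y} z y) x := by
  rw [← sh_prob hP hμ]
  congr 1
  apply measure_congr
  filter_upwards [start hμ x] with ω hω
  apply propext
  change hit {y} ω < hitPlus {x} ω ↔ sh ω ∈ hitsAt {x, y} y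
  rw [mem_hitsAt]
  constructor
  · intro h
    obtain ⟨n, hn⟩ := ENat.ne_top_iff_exists.1 (ne_top_of_lt h)
    rw [← hn] at h
    have h1 := (hit_eq_iff {y} ω n).1 hn.symm
    cases n with
    | zero => exact absurd (hω ▸ h1.1) hxy
    | succ n =>
      refine ⟨n, ⟨Or.inr h1.1, fun m hm => ?_⟩, h1.1⟩
      rintro (hx | hy)
      · have : hitPlus {x} ω ≤ ((m + 1 : ℕ) : ℕ∞) := sInf_le ⟨m + 1, ⟨by omega, hx⟩, rfl⟩
        have h2 := h.trans_le this
        have : n + 1 < m + 1 := by exact_mod_cast h2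
        omega
      · exact h1.2 (m + 1) (by omega) hy
  · rintro ⟨n, ⟨h1, h2⟩, h3⟩
    have a : hit {y} ω ≤ ((n + 1 : ℕ) : ℕ∞) := sInf_le ⟨n + 1, h3, rfl⟩
    have b : ((n + 2 : ℕ) : ℕ∞) ≤ hitPlus {x} ω := by
      apply le_sInf
      rintro _ ⟨m, ⟨hm1, hm2⟩, rfl⟩
      have : n + 2 ≤ m := by
        by_contra hc
        obtain ⟨k, rfl⟩ : ∃ k, m = k + 1 := ⟨m - 1, by omega⟩
        rcases Nat.lt_or_ge k n with hk | hk
        · exact h2 k hk (Or.inl hm2)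
        · have : k = n := by omega
          subst this
          exact hxy (hm2.symm.trans h3)
      exact_mod_cast this
    refine a.trans_lt (lt_of_lt_of_le ?_ b)
    exact_mod_cast Nat.lt_succ_self (n + 1)

end Prob

/-- There are universal constants `C, C' > 0` such that for the lazy simple random
walk on any connected `d`-regular graph on `N` vertices, every nonempty `S` and every
`x ∈ S`, the harmonic measure from the uniform distribution satisfies
`h_S(x) ≤ (C/(u(P)(1−λ))) max(1/|S|, log N / N) ≤ (C'/(1−λ)²) max(1/|S|, log N / N)`. -/
theorem stmt9 :
    ∃ C : ℝ, 0 < C ∧ ∃ C' : ℝ, 0 < C' ∧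
      ∀ (G : Type) [Fintype G] [DecidableEq G] [MeasurableSpace G]
        [MeasurableSingletonClass G]
        (H : SimpleGraph G) [DecidableRel H.Adj] (d : ℕ),
        H.IsRegularOfDegree d → H.Connected →
        ∀ (μ : G → Measure (ℕ → G)), IsMarkovChain (lazySRW H d) μ →
        ∀ (S : Set G), S.Nonempty → ∀ x ∈ S,
          harmStat (fun _ => ((Fintype.card G : ℝ))⁻¹) μ S x ≤
              C / (uP μ * (1 - lam (lazySRW H d) (fun _ => ((Fintype.card G : ℝ))⁻¹))) *
                max (1 / (S.ncard : ℝ)) (Real.log (Fintype.card G) / (Fintype.card G : ℝ)) ∧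
            C / (uP μ * (1 - lam (lazySRW H d) (fun _ => ((Fintype.card G : ℝ))⁻¹))) *
                max (1 / (S.ncard : ℝ)) (Real.log (Fintype.card G) / (Fintype.card G : ℝ)) ≤
              C' / (1 - lam (lazySRW H d) (fun _ => ((Fintype.card G : ℝ))⁻¹)) ^ 2 *
                max (1 / (S.ncard : ℝ)) (Real.log (Fintype.card G) / (Fintype.card G : ℝ)) := by
  refine ⟨5, by norm_num, 10, by norm_num, ?_⟩
  intro G _ _ _ _ H _ d hreg hconn μ hμ S hS x hx
  have hne : Nonempty G := ⟨x⟩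
  -- the one-vertex graph is excluded by the Markov chain hypothesis
  have hnt : Nontrivial G := by
    by_contra hc
    rw [not_nontrivial_iff_subsingleton] at hc
    have := hμ.1 x
    have h := hμ.2 x 1 (fun _ => x)
    have e : {ω : ℕ → G | ∀ i ≤ 1, ω i = (fun _ => x) i} = Set.univ := by
      ext ω
      simp only [Set.mem_setOf_eq, Set.mem_univ, iff_true]
      exact fun i _ => Subsingleton.elim _ _
    rw [e, measure_univ] at h
    simp [lazySRW] at h
    have := congrArg ENNReal.toReal h
    norm_num at this
  have hd : 0 < d := by
    rw [← hreg x]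
    exact hconn.preconnected.degree_pos_of_nontrivial x
  have hL := srw_lazy H d hd hreg
  set N : ℝ := (Fintype.card G : ℝ) with hN
  have hN0 : 0 < N := by rw [hN]; exact_mod_cast Fintype.card_pos
  have hs := lam_spec hL
  have hl0 := lam_nonneg (lazySRW H d) (fun _ => N⁻¹)
  have hl1 := lam_lt_one hL (srw_conn H d hd hconn)
  rw [← hN] at hs hl1
  set l := lam (lazySRW H d) (fun _ => N⁻¹) with hl
  have hg : 0 < 1 - l := by linarith
  set k : ℝ := (S.ncard : ℝ) with hk
  have hk0 : 0 < k := by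
    rw [hk]; exact_mod_cast (Set.ncard_pos (Set.toFinite S)).2 hS
  have hkN : k ≤ N := by
    rw [hN, hk, ← Nat.card_eq_fintype_card]
    exact_mod_cast Set.ncard_le_card S
  set M := max (1 / k) (Real.log N / N) with hM
  have hM0 : 0 < M := lt_max_of_lt_left (by positivity)
  -- bounds on u
  have hu1 : uP μ ≤ 1 := by
    obtain ⟨a, b, hab⟩ := hnt.exists_pair_ne
    refine le_trans (b := (μ a {ω | hit {b} ω < hitPlus {a} ω}).toReal)
      (csInf_le ⟨0, ?_⟩ ⟨a, b, hab, rfl⟩) ?_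
    · rintro r ⟨_, _, _, rfl⟩
      exact ENNReal.toReal_nonneg
    · have := hμ.1 a
      exact measureReal_le_one
  have hu2 : (1 - l) / 2 ≤ uP μ := by
    obtain ⟨a, b, hab⟩ := hnt.exists_pair_ne
    refine le_csInf ⟨_, a, b, hab, rfl⟩ ?_
    rintro r ⟨a, b, hab, rfl⟩
    rw [u_event hL.nn hμ a b hab]
    refine u_bound hL hl1 hs a b hab _ ?_ ?_ ?_
    · rw [harm_in hμ _ _ _ (by simp), if_neg hab]
    · rw [harm_in hμ _ _ _ (by simp), if_pos rfl]
    · intro z hza hzb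
      exact harm_out hL.nn hμ _ _ _ (by simp [hza, hzb])
  have hu0 : 0 < uP μ := by linarith
  constructor
  · have hb := g_bound hL hl0 hl1 hs S hS x hx (fun y => harm μ S y x)
      (fun y hy => harm_in hμ S x y hy) (fun y hy => harm_out hL.nn hμ S x y hy)
    rw [← hN, ← hk] at hb
    unfold harmStat
    rw [← Finset.mul_sum, inv_mul_le_iff₀ hN0]
    have m1 : N / k ≤ N * M := by
      calc N / k = N * (1 / k) := by ring
        _ ≤ N * M := mul_le_mul_of_nonneg_left (le_max_left _ _) hN0.le
    have m2 : Real.log N ≤ N * M := by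
      calc Real.log N = N * (Real.log N / N) := by field_simp
        _ ≤ N * M := mul_le_mul_of_nonneg_left (le_max_right _ _) hN0.le
    have m3 : 1 ≤ N / k := by rw [one_le_div hk0]; exact hkN
    calc ∑ y, harm μ S y x ≤ 1 + (Real.log N + 1 + 2 * (N / k)) / (1 - l) := hb
      _ ≤ 5 * (N * M) / (1 - l) := by
        rw [le_div_iff₀ hg, add_mul, div_mul_cancel₀ _ hg.ne']
        linarith
      _ ≤ 5 * (N * M) / (uP μ * (1 - l)) := by
        apply div_le_div_of_nonneg_left (by positivity) (by positivity)
        nlinarith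
      _ = N * (5 / (uP μ * (1 - l)) * M) := by ring
  · apply mul_le_mul_of_nonneg_right _ hM0.le
    rw [div_le_div_iff₀ (by positivity) (by positivity)]
    nlinarith

end HM
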